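/- Every zero z of the entire function d(λ) = S(T,λ) is real and simple; in particular the derivative of d does not vanish at z: (d/dλ)S(T,λ)|_{λ=z} ≠ 0. -/

import Mathlib

/-!
Two solutions `y`, `v` for the parameters `λ`, `μ` have Wronskian `W = y v' - y' v` with
`W' = (λ - μ) y v`, and `W` is continuous across the jumps because the jump matrices have
determinant one. Since all coefficients are real, `conj S(·, z)` is a solution for the parameter
`conj z`; if `S(T, z) = 0`, taking `y = S(·, λ)` and `v = conj S(·, z)` yields
`S(T, λ) * conj S'(T, z) = (λ - conj z) F(λ)` with `F(λ) = ∫ S(t, λ) * conj S(t, z) dt`.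
At `λ = z` the left side vanishes while `F(z) = ∫ |S(t, z)|² dt > 0`, so `z` is real and the
factor `λ - conj z` is `λ - z`. As `F` is continuous at `z`, because solutions depend continuously
on `λ` (Grönwall's inequality with an integrable kernel), differentiating at `λ = z` gives
`∂S(T, z)/∂λ * conj S'(T, z) = F(z) ≠ 0`.
-/

open MeasureTheory Set

/-- `PiecewiseSLSol q N b γ η lam y y'` : the family of pieces `y j` (with
derivatives `y' j`), `j = 1,…,N`, solves `-y'' + q y = lam y` on each subinterval
`[b (j-1), b j]` (with `y`, `y'` absolutely continuous there, in equivalent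
integral form) and satisfies the discontinuity (jump) conditions
`y(bⱼ+0) = γⱼ y(bⱼ−0)`, `y'(bⱼ+0) = γⱼ⁻¹ y'(bⱼ−0) + ηⱼ y(bⱼ−0)` at the interior
points `b 1 < … < b (N-1)`. -/
def PiecewiseSLSol (q : ℝ → ℝ) (N : ℕ) (b : ℕ → ℝ) (γ η : ℕ → ℝ) (lam : ℂ)
    (y y' : ℕ → ℝ → ℂ) : Prop :=
  (∀ j, 1 ≤ j → j ≤ N → ∀ x ∈ Icc (b (j - 1)) (b j),
      y j x = y j (b (j - 1)) + ∫ t in (b (j - 1))..x, y' j t) ∧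
  (∀ j, 1 ≤ j → j ≤ N → ∀ x ∈ Icc (b (j - 1)) (b j),
      y' j x = y' j (b (j - 1)) + ∫ t in (b (j - 1))..x, ((q t : ℂ) - lam) * y j t) ∧
  (∀ j, 1 ≤ j → j ≤ N - 1 →
      y (j + 1) (b j) = (γ j : ℂ) * y j (b j) ∧
      y' (j + 1) (b j) = ((γ j : ℂ))⁻¹ * y' j (b j) + (η j : ℂ) * y j (b j))

open Filter Topology ComplexConjugate

section AbsoluteContinuity

variable {a c : ℝ}

lemma absolutelyContinuousOnInterval_of_dist_le {X Y : Type*} [PseudoMetricSpace X]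
    [PseudoMetricSpace Y] {f : ℝ → X} {g : ℝ → Y} {K : ℝ}
    (hf : AbsolutelyContinuousOnInterval f a c)
    (hfg : ∀ s ∈ uIcc a c, ∀ t ∈ uIcc a c, dist (g s) (g t) ≤ K * dist (f s) (f t)) :
    AbsolutelyContinuousOnInterval g a c := by
  unfold AbsolutelyContinuousOnInterval at hf ⊢
  have hKf := Tendsto.const_mul K hf
  rw [mul_zero] at hKf
  refine squeeze_zero' (.of_forall fun E => Finset.sum_nonneg fun i _ => dist_nonneg) ?_ hKf
  filter_upwards [inf_le_right (a := AbsolutelyContinuousOnInterval.totalLengthFilter)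
    (mem_principal_self _)] with E hE
  rw [Finset.mul_sum]
  exact Finset.sum_le_sum fun i hi => hfg _ (hE.1 i hi).1 _ (hE.1 i hi).2

lemma absolutelyContinuousOnInterval_comp_of_contDiff {F : Type*} [NormedAddCommGroup F]
    [NormedSpace ℝ F] {φ : ℝ → F} {f : ℝ → ℝ} (hφ : ContDiff ℝ 1 φ)
    (hf : AbsolutelyContinuousOnInterval f a c) :
    AbsolutelyContinuousOnInterval (fun t => φ (f t)) a c := by
  obtain ⟨C, hC⟩ := hf.exists_bound
  obtain ⟨K, hK⟩ := hφ.contDiffOn.exists_lipschitzOnWith one_ne_zero (convex_Icc (-C) C)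
    isCompact_Icc
  have hmem : ∀ t ∈ uIcc a c, f t ∈ Icc (-C) C := fun t ht => abs_le.mp (hC t ht)
  exact absolutelyContinuousOnInterval_of_dist_le hf fun s hs t ht =>
    hK.dist_le_mul _ (hmem s hs) _ (hmem t ht)

variable {E : Type*} [NormedAddCommGroup E] [NormedSpace ℝ E] {f f' : ℝ → E}

/-- `f` is absolutely continuous on the interval with endpoints `a` and `c`, with derivative `f'`,
encoded as the integral form of the fundamental theorem of calculus. The integrability of `f'` has
to be required separately, because the integral of a non-integrable function is `0`. -/
structure IsPrimitiveOn (f f' : ℝ → E) (a c : ℝ) : Prop where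
  intervalIntegrable : IntervalIntegrable f' volume a c
  eq_add_integral : ∀ x ∈ uIcc a c, f x = f a + ∫ t in a..x, f' t

namespace IsPrimitiveOn

lemma mono (hf : IsPrimitiveOn f f' a c) {x : ℝ} (hx : x ∈ uIcc a c) :
    IsPrimitiveOn f f' a x where
  intervalIntegrable := hf.intervalIntegrable.mono_set (uIcc_subset_uIcc left_mem_uIcc hx)
  eq_add_integral t ht := hf.eq_add_integral t (uIcc_subset_uIcc left_mem_uIcc hx ht)

lemma continuousOn (hf : IsPrimitiveOn f f' a c) : ContinuousOn f (uIcc a c) :=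
  (continuousOn_const.add (intervalIntegral.continuousOn_primitive_interval'
    hf.intervalIntegrable left_mem_uIcc)).congr hf.eq_add_integral

lemma integral_eq_sub (hf : IsPrimitiveOn f f' a c) : ∫ t in a..c, f' t = f c - f a := by
  rw [hf.eq_add_integral c right_mem_uIcc, add_sub_cancel_left]

lemma norm_le (hf : IsPrimitiveOn f f' a c) (hac : a ≤ c) :
    ‖f c‖ ≤ ‖f a‖ + ∫ t in a..c, ‖f' t‖ := by
  rw [hf.eq_add_integral c right_mem_uIcc]
  grw [norm_add_le, intervalIntegral.norm_integral_le_integral_norm hac]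

lemma sub {g g' : ℝ → E} (hf : IsPrimitiveOn f f' a c) (hg : IsPrimitiveOn g g' a c) :
    IsPrimitiveOn (fun t => f t - g t) (fun t => f' t - g' t) a c where
  intervalIntegrable := hf.intervalIntegrable.sub hg.intervalIntegrable
  eq_add_integral x hx := by
    rw [intervalIntegral.integral_sub (hf.mono hx).intervalIntegrable
      (hg.mono hx).intervalIntegrable, (hf.mono hx).integral_eq_sub, (hg.mono hx).integral_eq_sub]
    abel

lemma absolutelyContinuousOnInterval (hf : IsPrimitiveOn f f' a c) :
    AbsolutelyContinuousOnInterval f a c := by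
  refine absolutelyContinuousOnInterval_of_dist_le (K := 1)
    (hf.intervalIntegrable.norm.absolutelyContinuousOnInterval_intervalIntegral left_mem_uIcc)
    fun s hs t ht => ?_
  have hs' := (hf.mono hs).intervalIntegrable
  have ht' := (hf.mono ht).intervalIntegrable
  rw [one_mul, dist_eq_norm, dist_eq_norm, hf.eq_add_integral s hs, hf.eq_add_integral t ht,
    add_sub_add_left_eq_sub, intervalIntegral.integral_interval_sub_left hs' ht',
    intervalIntegral.integral_interval_sub_left hs'.norm ht'.norm, Real.norm_eq_abs]
  exact intervalIntegral.norm_integral_le_abs_integral_norm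

variable [CompleteSpace E]

lemma ae_hasDerivAt (hf : IsPrimitiveOn f f' a c) :
    ∀ᵐ x, x ∈ uIcc a c → HasDerivAt f (f' x) x := by
  filter_upwards [hf.intervalIntegrable.ae_hasDerivAt_integral, Measure.ae_ne volume a,
    Measure.ae_ne volume c] with x hderiv hxa hxc hx
  refine ((hderiv hx a left_mem_uIcc).const_add (f a)).congr_of_eventuallyEq ?_
  filter_upwards [Icc_mem_nhds (lt_of_le_of_ne hx.1 (by grind))
    (lt_of_le_of_ne hx.2 (by grind))] with t ht
  exact hf.eq_add_integral t ht

lemma of_ae_hasDerivAt (hf : AbsolutelyContinuousOnInterval f a c)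
    (hf' : IntervalIntegrable f' volume a c)
    (hderiv : ∀ᵐ x, x ∈ uIcc a c → HasDerivAt f (f' x) x) : IsPrimitiveOn f f' a c := by
  have hprim : IsPrimitiveOn (fun x => ∫ t in a..x, f' t) f' a c := ⟨hf', by simp⟩
  obtain ⟨C, hC⟩ := (hf.fun_sub hprim.absolutelyContinuousOnInterval).const_of_ae_hasDerivAt_zero
    (by
      filter_upwards [hderiv, hprim.ae_hasDerivAt] with x hx hx' hmem
      simpa only [sub_self] using (hx hmem).fun_sub (hx' hmem))
  refine ⟨hf', fun x hx => ?_⟩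
  have ha := hC a left_mem_uIcc
  rw [intervalIntegral.integral_same, sub_zero] at ha
  rw [ha, ← hC x hx, sub_add_cancel]

lemma mul {𝔸 : Type*} [NormedRing 𝔸] [NormMulClass 𝔸] [NormedAlgebra ℝ 𝔸] [CompleteSpace 𝔸]
    {f f' g g' : ℝ → 𝔸} (hf : IsPrimitiveOn f f' a c) (hg : IsPrimitiveOn g g' a c) :
    IsPrimitiveOn (fun t => f t * g t) (fun t => f' t * g t + f t * g' t) a c := by
  refine of_ae_hasDerivAt
    (hf.absolutelyContinuousOnInterval.fun_smul hg.absolutelyContinuousOnInterval)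
    ((hf.intervalIntegrable.mul_continuousOn hg.continuousOn).add
      (hg.intervalIntegrable.continuousOn_mul hf.continuousOn)) ?_
  filter_upwards [hf.ae_hasDerivAt, hg.ae_hasDerivAt] with x hx hx' hmem
  exact (hx hmem).fun_mul (hx' hmem)

lemma exp {f f' : ℝ → ℝ} (hf : IsPrimitiveOn f f' a c) :
    IsPrimitiveOn (fun t => Real.exp (f t)) (fun t => Real.exp (f t) * f' t) a c := by
  refine of_ae_hasDerivAt
    (absolutelyContinuousOnInterval_comp_of_contDiff Real.contDiff_exp
      hf.absolutelyContinuousOnInterval)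
    (hf.intervalIntegrable.continuousOn_mul hf.continuousOn.rexp) ?_
  filter_upwards [hf.ae_hasDerivAt] with x hx hmem
  exact (hx hmem).exp

end IsPrimitiveOn

/-- Here `∫ t in a..x, f' t` may take its junk value `0`: the set `s` of those `x` for which `f'` is
integrable up to `x` is an interval on which `f` is continuous, and off `s` the function `f` is
constant. -/
lemma intervalIntegrable_of_eq_add_integral (hac : a ≤ c) {B : ℝ}
    (hf : ∀ x ∈ Icc a c, f x = f a + ∫ t in a..x, f' t)
    (hB : ∀ x ∈ Icc a c, IntervalIntegrable f' volume a x → ‖f x‖ ≤ B) :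
    IntervalIntegrable f volume a c := by
  set s : Set ℝ := {x ∈ Icc a c | IntervalIntegrable f' volume a x}
  have hprim : ∀ x ∈ s, IsPrimitiveOn f f' a x := fun x hx => ⟨hx.2, fun t ht => by
    rw [uIcc_of_le hx.1.1] at ht
    exact hf t ⟨ht.1, ht.2.trans hx.1.2⟩⟩
  have hs : MeasurableSet s := by
    refine OrdConnected.measurableSet ⟨fun x hx w hw t ht => ?_⟩
    have hat : a ≤ t := hx.1.1.trans ht.1
    exact ⟨⟨hat, ht.2.trans hw.1.2⟩,
      ((hprim w hw).mono (Icc_subset_uIcc ⟨hat, ht.2⟩)).intervalIntegrable⟩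
  have hcont : ContinuousOn f s := by
    intro x hx
    by_cases hmax : ∃ w ∈ s, x < w
    · obtain ⟨w, hw, hxw⟩ := hmax
      refine ((hprim w hw).continuousOn x (Icc_subset_uIcc ⟨hx.1.1, hxw.le⟩)).mono_of_mem_nhdsWithin
        (mem_nhdsWithin.mpr ⟨Iio w, isOpen_Iio, hxw, fun t ht => ?_⟩)
      exact Icc_subset_uIcc ⟨ht.2.1.1, ht.1.le⟩
    · push Not at hmax
      exact ((hprim x hx).continuousOn x right_mem_uIcc).mono fun t ht =>
        Icc_subset_uIcc ⟨ht.1.1, hmax t ht⟩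
  have hfin : volume s ≠ ⊤ := ((measure_mono (sep_subset _ _)).trans_lt measure_Icc_lt_top).ne
  have hon : IntegrableOn f s := .of_bound hfin.lt_top (hcont.aestronglyMeasurable hs) B
    ((ae_restrict_iff' hs).mpr (.of_forall fun x hx => hB x hx.1 hx.2))
  have hoff : IntegrableOn f (Icc a c \ s) := by
    refine (integrableOn_congr_fun (g := fun _ => f a) (fun x hx => ?_)
      (measurableSet_Icc.diff hs)).mpr (integrableOn_const
        ((measure_mono sdiff_subset).trans_lt measure_Icc_lt_top).ne)
    have hx' : ¬ IntervalIntegrable f' volume a x := fun h => hx.2 ⟨hx.1, h⟩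
    rw [hf x hx.1, intervalIntegral.integral_undef hx', add_zero]
  rw [intervalIntegrable_iff_integrableOn_Icc_of_le hac,
    ← union_sdiff_cancel (sep_subset (Icc a c) fun x => IntervalIntegrable f' volume a x)]
  exact hon.union hoff

/-- For `v t = A + ∫ₐᵗ k u` the function `v * exp (-∫ₐᵗ k)` has derivative
`k (u - v) exp (-∫ₐᵗ k) ≤ 0`. -/
theorem le_mul_exp_integral_of_le_add_integral {A : ℝ} {k u : ℝ → ℝ} (hac : a ≤ c)
    (hk : IntervalIntegrable k volume a c) (hk₀ : ∀ t ∈ Icc a c, 0 ≤ k t)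
    (hu : ContinuousOn u (Icc a c))
    (hle : ∀ t ∈ Icc a c, u t ≤ A + ∫ s in a..t, k s * u s) :
    u c ≤ A * Real.exp (∫ t in a..c, k t) := by
  set v : ℝ → ℝ := fun x => A + ∫ t in a..x, k t * u t
  set w : ℝ → ℝ := fun x => Real.exp (∫ t in a..x, -k t)
  have hv : IsPrimitiveOn v (fun t => k t * u t) a c :=
    ⟨hk.mul_continuousOn (uIcc_of_le hac ▸ hu), by simp [v]⟩
  have hw : IsPrimitiveOn w (fun t => w t * -k t) a c := IsPrimitiveOn.exp ⟨hk.neg, by simp⟩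
  have hvw : v c * w c ≤ A := by
    have hint := (hv.mul hw).integral_eq_sub
    have hnonpos : ∫ t in a..c, (k t * u t * w t + v t * (w t * -k t)) ≤ 0 := by
      rw [← neg_nonneg, ← intervalIntegral.integral_neg]
      refine intervalIntegral.integral_nonneg hac fun t ht => ?_
      nlinarith [mul_nonneg (mul_nonneg (hk₀ t ht) (sub_nonneg.mpr (hle t ht)))
        (Real.exp_pos (∫ s in a..t, -k s)).le]
    have hva : v a * w a = A := by simp [v, w]
    linarith
  have hwc : w c = (Real.exp (∫ t in a..c, k t))⁻¹ := by
    simp only [w, intervalIntegral.integral_neg, Real.exp_neg]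
  calc u c ≤ v c := hle c ⟨hac, le_rfl⟩
    _ ≤ A * Real.exp (∫ t in a..c, k t) := by
      rwa [hwc, mul_inv_le_iff₀ (Real.exp_pos _)] at hvw

end AbsoluteContinuity

section SturmLiouville

variable {𝕜 : Type*} [RCLike 𝕜] {a c : ℝ} {p r f y y' v v' : ℝ → 𝕜}

lemma IsPrimitiveOn.norm_add_norm_le_mul_exp (hac : a ≤ c) (hp : IntervalIntegrable p volume a c)
    (hy : IsPrimitiveOn y y' a c) (hy' : IsPrimitiveOn y' (fun t => p t * y t + f t) a c) :
    ‖y c‖ + ‖y' c‖ ≤ (‖y a‖ + ‖y' a‖ + ∫ t in a..c, ‖f t‖) *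
      Real.exp (∫ t in a..c, (1 + ‖p t‖)) := by
  have hk : IntervalIntegrable (fun t => 1 + ‖p t‖) volume a c :=
    intervalIntegrable_const.add hp.norm
  have hf : IntervalIntegrable f volume a c := by
    simpa only [add_sub_cancel_left] using
      hy'.intervalIntegrable.sub (hp.mul_continuousOn hy.continuousOn)
  have hcont : ContinuousOn (fun t => ‖y t‖ + ‖y' t‖) (uIcc a c) :=
    hy.continuousOn.norm.add hy'.continuousOn.norm
  refine le_mul_exp_integral_of_le_add_integral (u := fun t => ‖y t‖ + ‖y' t‖) hac hk
    (fun t _ => by positivity) (uIcc_of_le hac ▸ hcont) fun x hx => ?_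
  have hsub : uIcc a x ⊆ uIcc a c := uIcc_subset_uIcc_left (Icc_subset_uIcc hx)
  have hyx := hy.mono (Icc_subset_uIcc hx)
  have hyx' := hy'.mono (Icc_subset_uIcc hx)
  have hfx := (hf.mono_set hsub).norm
  have hkx := (hk.mul_continuousOn hcont).mono_set hsub
  have hle : ∫ t in a..x, (‖y' t‖ + ‖p t * y t + f t‖) ≤
      ∫ t in a..x, (‖f t‖ + (1 + ‖p t‖) * (‖y t‖ + ‖y' t‖)) := by
    refine intervalIntegral.integral_mono_on hx.1
      (hyx.intervalIntegrable.norm.add hyx'.intervalIntegrable.norm) (hfx.add hkx) fun t _ => ?_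
    have := norm_add_le (p t * y t) (f t)
    rw [norm_mul] at this
    nlinarith [norm_nonneg (y t), mul_nonneg (norm_nonneg (p t)) (norm_nonneg (y' t))]
  rw [intervalIntegral.integral_add hyx.intervalIntegrable.norm hyx'.intervalIntegrable.norm,
    intervalIntegral.integral_add hfx hkx] at hle
  have hmono : ∫ t in a..x, ‖f t‖ ≤ ∫ t in a..c, ‖f t‖ :=
    intervalIntegral.integral_mono_interval le_rfl hx.1 hx.2
      (.of_forall fun t => norm_nonneg (f t)) hf.norm
  linarith [hyx.norm_le hx.1, hyx'.norm_le hx.1]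

/-- `y` solves `y'' = p y` on the interval with endpoints `a` and `c` in the Carathéodory sense:
`y` and its derivative `y'` are absolutely continuous. The equation `-y'' + q y = λ y` is the case
`p = q - λ`. -/
structure IsSLSolutionOn (p y y' : ℝ → 𝕜) (a c : ℝ) : Prop where
  isPrimitiveOn : IsPrimitiveOn y y' a c
  isPrimitiveOn_deriv : IsPrimitiveOn y' (fun t => p t * y t) a c

/-- The Wronskian of two functions `y`, `v` with derivatives `y'`, `v'`. -/
def wronskian (y y' v v' : ℝ → 𝕜) (t : ℝ) : 𝕜 := y t * v' t - y' t * v t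

namespace IsSLSolutionOn

/-- As long as `p * y` is integrable on `[a, x]`, Grönwall's inequality bounds `y'` there by a
constant independent of `x`, so the integrals in the hypotheses never take a junk value. -/
lemma of_integral_eqns (hac : a ≤ c) (hp : IntervalIntegrable p volume a c)
    (hy : ∀ x ∈ Icc a c, y x = y a + ∫ t in a..x, y' t)
    (hy' : ∀ x ∈ Icc a c, y' x = y' a + ∫ t in a..x, p t * y t) : IsSLSolutionOn p y y' a c := by
  have hint : IntervalIntegrable y' volume a c := by
    refine intervalIntegrable_of_eq_add_integral
      (B := (‖y a‖ + ‖y' a‖) * Real.exp (∫ t in a..c, (1 + ‖p t‖))) hac hy' fun x hx hpy => ?_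
    have hprim' : IsPrimitiveOn y' (fun t => p t * y t) a x := ⟨hpy, fun t ht => by
      rw [uIcc_of_le hx.1] at ht
      exact hy' t ⟨ht.1, ht.2.trans hx.2⟩⟩
    have hprim : IsPrimitiveOn y y' a x := ⟨hprim'.continuousOn.intervalIntegrable, fun t ht => by
      rw [uIcc_of_le hx.1] at ht
      exact hy t ⟨ht.1, ht.2.trans hx.2⟩⟩
    have hpx := hp.mono_set (uIcc_subset_uIcc_left (Icc_subset_uIcc hx))
    have hbound := hprim.norm_add_norm_le_mul_exp (f := 0) hx.1 hpx (by simpa using hprim')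
    have hmono : ∫ t in a..x, (1 + ‖p t‖) ≤ ∫ t in a..c, (1 + ‖p t‖) :=
      intervalIntegral.integral_mono_interval le_rfl hx.1 hx.2
        (.of_forall fun t => by positivity) (intervalIntegrable_const.add hp.norm)
    simp only [Pi.zero_apply, norm_zero, intervalIntegral.integral_zero, add_zero] at hbound
    grw [← hmono]
    exact (le_add_of_nonneg_left (norm_nonneg _)).trans hbound
  rw [← uIcc_of_le hac] at hy hy'
  have hprim : IsPrimitiveOn y y' a c := ⟨hint, hy⟩
  exact ⟨hprim, hp.mul_continuousOn hprim.continuousOn, hy'⟩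

lemma isPrimitiveOn_wronskian (hy : IsSLSolutionOn p y y' a c) (hv : IsSLSolutionOn r v v' a c) :
    IsPrimitiveOn (wronskian y y' v v') (fun t => (r t - p t) * (y t * v t)) a c := by
  have hderiv : (fun t => (r t - p t) * (y t * v t)) = fun t =>
      y' t * v' t + y t * (r t * v t) - (p t * y t * v t + y' t * v' t) := by
    funext t
    ring
  rw [hderiv]
  exact (hy.isPrimitiveOn.mul hv.isPrimitiveOn_deriv).sub
    (hy.isPrimitiveOn_deriv.mul hv.isPrimitiveOn)

lemma deriv_eq_zero (hy : IsSLSolutionOn p y y' a c) (hac : a < c)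
    (hzero : ∀ t ∈ Icc a c, y t = 0) : y' a = 0 := by
  have hconst : ∀ t ∈ uIcc a c, y' t = y' a := fun t ht => by
    have hpy : ∫ s in a..t, p s * y s = ∫ _ in a..t, (0 : 𝕜) :=
      intervalIntegral.integral_congr fun s hs => by
        have hs' := uIcc_subset_uIcc_left ht hs
        rw [uIcc_of_le hac.le] at hs'
        simp only [hzero s hs', mul_zero]
    rw [hy.isPrimitiveOn_deriv.eq_add_integral t ht, hpy, intervalIntegral.integral_zero, add_zero]
  have hint := hy.isPrimitiveOn.integral_eq_sub
  rw [intervalIntegral.integral_congr hconst, intervalIntegral.integral_const,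
    hzero a (left_mem_Icc.mpr hac.le), hzero c (right_mem_Icc.mpr hac.le), sub_zero] at hint
  exact (smul_eq_zero.mp hint).resolve_left (sub_ne_zero.mpr hac.ne')

lemma norm_sub_add_norm_sub_le (hy : IsSLSolutionOn p y y' a c) (hv : IsSLSolutionOn r v v' a c)
    (hp : IntervalIntegrable p volume a c) {x : ℝ} (hx : x ∈ Icc a c) :
    ‖y x - v x‖ + ‖y' x - v' x‖ ≤
      (‖y a - v a‖ + ‖y' a - v' a‖ + ∫ t in a..c, ‖(p t - r t) * v t‖) *
        Real.exp (∫ t in a..c, (1 + ‖p t‖)) := by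
  have hsub : uIcc a x ⊆ uIcc a c := uIcc_subset_uIcc_left (Icc_subset_uIcc hx)
  have hdiff := hy.isPrimitiveOn.sub hv.isPrimitiveOn
  have hdiff' : IsPrimitiveOn (fun t => y' t - v' t)
      (fun t => p t * (y t - v t) + (p t - r t) * v t) a c := by
    convert hy.isPrimitiveOn_deriv.sub hv.isPrimitiveOn_deriv using 2
    ring
  have hf : IntervalIntegrable (fun t => (p t - r t) * v t) volume a c := by
    simpa only [add_sub_cancel_left] using
      hdiff'.intervalIntegrable.sub (hp.mul_continuousOn hdiff.continuousOn)
  refine ((hdiff.mono (Icc_subset_uIcc hx)).norm_add_norm_le_mul_exp hx.1 (hp.mono_set hsub)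
    (hdiff'.mono (Icc_subset_uIcc hx))).trans ?_
  gcongr
  · exact add_nonneg (by positivity)
      (intervalIntegral.integral_nonneg (hx.1.trans hx.2) fun t _ => norm_nonneg _)
  · exact intervalIntegral.integral_mono_interval le_rfl hx.1 hx.2
      (.of_forall fun t => norm_nonneg _) hf.norm
  · exact intervalIntegral.integral_mono_interval le_rfl hx.1 hx.2
      (.of_forall fun t => by positivity) (intervalIntegrable_const.add hp.norm)

theorem tendstoUniformlyOn {ι : Type*} {l : Filter ι} {P Y Y' : ι → ℝ → 𝕜} (hac : a ≤ c)
    (hp : IntervalIntegrable p volume a c) (hP : ∀ i, IntervalIntegrable (P i) volume a c)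
    (hPp : Tendsto (fun i => ∫ t in a..c, ‖P i t - p t‖) l (𝓝 0))
    (hY : ∀ i, IsSLSolutionOn (P i) (Y i) (Y' i) a c) (hy : IsSLSolutionOn p y y' a c)
    (hinit : Tendsto (fun i => Y i a) l (𝓝 (y a)))
    (hinit' : Tendsto (fun i => Y' i a) l (𝓝 (y' a))) :
    TendstoUniformlyOn Y y l (Icc a c) ∧ TendstoUniformlyOn Y' y' l (Icc a c) := by
  obtain ⟨M, hM⟩ := isCompact_uIcc.exists_bound_of_continuousOn hy.isPrimitiveOn.continuousOn
  set ε : ι → ℝ := fun i => ∫ t in a..c, ‖P i t - p t‖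
  set bound : ι → ℝ := fun i => (‖Y i a - y a‖ + ‖Y' i a - y' a‖ + ε i * M) *
    Real.exp ((∫ t in a..c, (1 + ‖p t‖)) + ε i)
  have hforcing : ∀ i, ∫ t in a..c, ‖(P i t - p t) * y t‖ ≤ ε i * M := fun i => by
    rw [← intervalIntegral.integral_mul_const]
    have hint := (hP i).sub hp
    refine intervalIntegral.integral_mono_on hac
      (hint.mul_continuousOn hy.isPrimitiveOn.continuousOn).norm
      (hint.norm.mul_const M) fun t ht => ?_
    grw [norm_mul, hM t (Icc_subset_uIcc ht)]
  have hkernel : ∀ i, ∫ t in a..c, (1 + ‖P i t‖) ≤ (∫ t in a..c, (1 + ‖p t‖)) + ε i := fun i => by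
    have hint : IntervalIntegrable (fun t => 1 + ‖p t‖) volume a c :=
      intervalIntegrable_const.add hp.norm
    rw [← intervalIntegral.integral_add hint ((hP i).sub hp).norm]
    refine intervalIntegral.integral_mono_on hac (intervalIntegrable_const.add (hP i).norm)
      (hint.add ((hP i).sub hp).norm) fun t _ => ?_
    linarith [norm_le_norm_add_norm_sub' (P i t) (p t)]
  have hle : ∀ i, ∀ x ∈ Icc a c, ‖Y i x - y x‖ + ‖Y' i x - y' x‖ ≤ bound i := fun i x hx => by
    have hnonneg : 0 ≤ ε i * M :=
      (intervalIntegral.integral_nonneg hac fun t _ => norm_nonneg _).trans (hforcing i)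
    grw [(hY i).norm_sub_add_norm_sub_le hy (hP i) hx, hforcing i, hkernel i]
  have hbound : Tendsto bound l (𝓝 0) := by
    simpa using (((tendsto_iff_norm_sub_tendsto_zero.mp hinit).add
      (tendsto_iff_norm_sub_tendsto_zero.mp hinit')).add (hPp.mul_const M)).mul
      (Real.continuous_exp.tendsto _ |>.comp (hPp.const_add (∫ t in a..c, (1 + ‖p t‖))))
  simp only [Metric.tendstoUniformlyOn_iff, dist_eq_norm']
  refine ⟨fun δ hδ => ?_, fun δ hδ => ?_⟩ <;>
    filter_upwards [hbound.eventually_lt_const hδ] with i hi x hx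
  · linarith [hle i x hx, norm_nonneg (Y' i x - y' x)]
  · linarith [hle i x hx, norm_nonneg (Y i x - y x)]

end IsSLSolutionOn

end SturmLiouville

/-- The bilinear pairing `∫ y v` over `[b 0, b N]` of two functions given by their pieces on the
intervals `[b j, b (j + 1)]`; the piece on `[b j, b (j + 1)]` has index `j + 1`, as in
`PiecewiseSLSol`. -/
noncomputable def piecewisePairing (N : ℕ) (b : ℕ → ℝ) (y v : ℕ → ℝ → ℂ) : ℂ :=
  ∑ j ∈ Finset.range N, ∫ t in b j..b (j + 1), y (j + 1) t * v (j + 1) t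

namespace PiecewiseSLSol

variable {q : ℝ → ℝ} {N : ℕ} {b γ η : ℕ → ℝ} {lam mu z : ℂ} {y y' v v' : ℕ → ℝ → ℂ}

lemma of_le (hy : PiecewiseSLSol q N b γ η lam y y') {M : ℕ} (hMN : M ≤ N) :
    PiecewiseSLSol q M b γ η lam y y' :=
  ⟨fun j hj hjM => hy.1 j hj (hjM.trans hMN), fun j hj hjM => hy.2.1 j hj (hjM.trans hMN),
    fun j hj hjM => hy.2.2 j hj (hjM.trans (Nat.sub_le_sub_right hMN 1))⟩

lemma isSLSolutionOn (hy : PiecewiseSLSol q N b γ η lam y y') {j : ℕ} (hj : j < N)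
    (hb : b j ≤ b (j + 1)) (hq : IntervalIntegrable q volume (b j) (b (j + 1))) :
    IsSLSolutionOn (fun t => (q t : ℂ) - lam) (y (j + 1)) (y' (j + 1)) (b j) (b (j + 1)) :=
  .of_integral_eqns hb (.sub ⟨hq.1.ofReal, hq.2.ofReal⟩ intervalIntegrable_const)
    (hy.1 (j + 1) (Nat.le_add_left 1 j) hj) (hy.2.1 (j + 1) (Nat.le_add_left 1 j) hj)

lemma conjugate (hy : PiecewiseSLSol q N b γ η lam y y') :
    PiecewiseSLSol q N b γ η (conj lam) (fun j t => conj (y j t)) (fun j t => conj (y' j t)) := by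
  have hint : ∀ (f : ℝ → ℂ) (s x : ℝ), conj (∫ t in s..x, f t) = ∫ t in s..x, conj (f t) :=
    fun f s x => by simp only [intervalIntegral, map_sub, integral_conj]
  refine ⟨fun j hj hjN x hx => ?_, fun j hj hjN x hx => ?_, fun j hj hjN => ⟨?_, ?_⟩⟩
  · simpa only [map_add, hint] using congrArg conj (hy.1 j hj hjN x hx)
  · simpa only [map_add, hint, map_mul, map_sub, Complex.conj_ofReal] using
      congrArg conj (hy.2.1 j hj hjN x hx)
  · simpa only [map_mul, Complex.conj_ofReal] using congrArg conj (hy.2.2 j hj hjN).1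
  · simpa only [map_add, map_mul, map_inv₀, Complex.conj_ofReal] using
      congrArg conj (hy.2.2 j hj hjN).2

lemma wronskian_jump (hy : PiecewiseSLSol q N b γ η lam y y')
    (hv : PiecewiseSLSol q N b γ η mu v v') {j : ℕ} (hj : 1 ≤ j) (hjN : j ≤ N - 1)
    (hγ : γ j ≠ 0) :
    wronskian (y (j + 1)) (y' (j + 1)) (v (j + 1)) (v' (j + 1)) (b j) =
      wronskian (y j) (y' j) (v j) (v' j) (b j) := by
  have hγ' : (γ j : ℂ) ≠ 0 := Complex.ofReal_ne_zero.mpr hγ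
  obtain ⟨hyj, hyj'⟩ := hy.2.2 j hj hjN
  obtain ⟨hvj, hvj'⟩ := hv.2.2 j hj hjN
  simp only [wronskian, hyj, hyj', hvj, hvj']
  field_simp
  ring

theorem wronskian_sub_wronskian (hN : 1 ≤ N) (hb : ∀ j < N, b j ≤ b (j + 1))
    (hq : ∀ j < N, IntervalIntegrable q volume (b j) (b (j + 1)))
    (hγ : ∀ j, 1 ≤ j → j ≤ N - 1 → γ j ≠ 0) (hy : PiecewiseSLSol q N b γ η lam y y')
    (hv : PiecewiseSLSol q N b γ η mu v v') :
    wronskian (y N) (y' N) (v N) (v' N) (b N) - wronskian (y 1) (y' 1) (v 1) (v' 1) (b 0) =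
      (lam - mu) * piecewisePairing N b y v := by
  have hpiece : ∀ j < N,
      wronskian (y (j + 1)) (y' (j + 1)) (v (j + 1)) (v' (j + 1)) (b (j + 1)) -
        wronskian (y (j + 1)) (y' (j + 1)) (v (j + 1)) (v' (j + 1)) (b j) =
      (lam - mu) * ∫ t in b j..b (j + 1), y (j + 1) t * v (j + 1) t := fun j hj => by
    rw [← ((hy.isSLSolutionOn hj (hb j hj) (hq j hj)).isPrimitiveOn_wronskian
      (hv.isSLSolutionOn hj (hb j hj) (hq j hj))).integral_eq_sub,
      ← intervalIntegral.integral_const_mul]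
    simp only [sub_sub_sub_cancel_left]
  induction N, hN using Nat.le_induction with
  | base => simpa [piecewisePairing] using hpiece 0 one_pos
  | succ N hN ih =>
    have hprev := ih (fun j hj => hb j (by omega)) (fun j hj => hq j (by omega))
      (fun j hj hjN => hγ j hj (by omega)) (hy.of_le N.le_succ) (hv.of_le N.le_succ)
      (fun j hj => hpiece j (by omega))
    have hjump := wronskian_jump hy hv hN le_rfl (hγ N hN le_rfl)
    rw [piecewisePairing, Finset.sum_range_succ, ← piecewisePairing, mul_add, ← hprev,
      ← hpiece N (by omega), hjump]
    ring

theorem piecewisePairing_conj_ne_zero (hN : 1 ≤ N) (hb : ∀ j < N, b j < b (j + 1))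
    (hq : ∀ j < N, IntervalIntegrable q volume (b j) (b (j + 1)))
    (hy : PiecewiseSLSol q N b γ η lam y y') (hinit : y' 1 (b 0) ≠ 0) :
    piecewisePairing N b y (fun j t => conj (y j t)) ≠ 0 := by
  have hcast : piecewisePairing N b y (fun j t => conj (y j t)) =
      ((∑ j ∈ Finset.range N, ∫ t in b j..b (j + 1), Complex.normSq (y (j + 1) t) : ℝ) : ℂ) := by
    simp only [piecewisePairing, Complex.mul_conj, Complex.ofReal_sum,
      intervalIntegral.integral_ofReal]
  rw [hcast, Complex.ofReal_ne_zero]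
  have hsol := hy.isSLSolutionOn hN (hb 0 hN).le (hq 0 hN)
  have hcont : ContinuousOn (fun t => Complex.normSq (y 1 t)) (Icc (b 0) (b 1)) :=
    Complex.continuous_normSq.comp_continuousOn
      (uIcc_of_le (hb 0 hN).le ▸ hsol.isPrimitiveOn.continuousOn)
  refine (Finset.sum_pos' (fun j hj => intervalIntegral.integral_nonneg
    (hb j (Finset.mem_range.mp hj)).le fun t _ => Complex.normSq_nonneg _)
    ⟨0, Finset.mem_range.mpr hN, ?_⟩).ne'
  refine intervalIntegral.integral_pos (hb 0 hN) hcont (fun t _ => Complex.normSq_nonneg _) ?_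
  by_contra! hvanish
  exact hinit (hsol.deriv_eq_zero (hb 0 hN) fun t ht =>
    Complex.normSq_eq_zero.mp ((hvanish t ht).antisymm (Complex.normSq_nonneg _)))

lemma tendstoUniformlyOn_of_continuousAt {S S' : ℕ → ℝ → ℂ → ℂ} {j : ℕ} (hj : j < N)
    (hb : b j ≤ b (j + 1)) (hq : IntervalIntegrable q volume (b j) (b (j + 1)))
    (hS : ∀ lam, PiecewiseSLSol q N b γ η lam (fun j x => S j x lam) (fun j x => S' j x lam))
    (hleft : ContinuousAt (S (j + 1) (b j)) z) (hleft' : ContinuousAt (S' (j + 1) (b j)) z) :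
    TendstoUniformlyOn (fun lam x => S (j + 1) x lam) (fun x => S (j + 1) x z) (𝓝 z)
      (Icc (b j) (b (j + 1))) ∧
    TendstoUniformlyOn (fun lam x => S' (j + 1) x lam) (fun x => S' (j + 1) x z) (𝓝 z)
      (Icc (b j) (b (j + 1))) := by
  have hpotential : ∀ lam : ℂ,
      IntervalIntegrable (fun t => (q t : ℂ) - lam) volume (b j) (b (j + 1)) :=
    fun lam => .sub ⟨hq.1.ofReal, hq.2.ofReal⟩ intervalIntegrable_const
  refine IsSLSolutionOn.tendstoUniformlyOn hb (hpotential z) hpotential ?_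
    (fun lam => (hS lam).isSLSolutionOn hj hb hq) ((hS z).isSLSolutionOn hj hb hq) hleft hleft'
  have hdist : Continuous fun lam : ℂ => (b (j + 1) - b j) * ‖z - lam‖ := by fun_prop
  simpa using hdist.tendsto z

theorem tendstoUniformlyOn {S S' : ℕ → ℝ → ℂ → ℂ} (hb : ∀ j < N, b j ≤ b (j + 1))
    (hq : ∀ j < N, IntervalIntegrable q volume (b j) (b (j + 1)))
    (hS : ∀ lam, PiecewiseSLSol q N b γ η lam (fun j x => S j x lam) (fun j x => S' j x lam))
    (hinit : ContinuousAt (S 1 (b 0)) z) (hinit' : ContinuousAt (S' 1 (b 0)) z) :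
    ∀ j < N,
      TendstoUniformlyOn (fun lam x => S (j + 1) x lam) (fun x => S (j + 1) x z) (𝓝 z)
        (Icc (b j) (b (j + 1))) ∧
      TendstoUniformlyOn (fun lam x => S' (j + 1) x lam) (fun x => S' (j + 1) x z) (𝓝 z)
        (Icc (b j) (b (j + 1))) := by
  intro j
  induction j with
  | zero =>
    exact fun hN => tendstoUniformlyOn_of_continuousAt hN (hb 0 hN) (hq 0 hN) hS hinit hinit'
  | succ j ih =>
    intro hj
    have hmem : b (j + 1) ∈ Icc (b j) (b (j + 1)) := right_mem_Icc.mpr (hb j (by omega))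
    obtain ⟨hprev, hprev'⟩ := ih (by omega)
    have hright : ContinuousAt (S (j + 1) (b (j + 1))) z := hprev.tendsto_at hmem
    have hright' : ContinuousAt (S' (j + 1) (b (j + 1))) z := hprev'.tendsto_at hmem
    have hjump := fun lam => (hS lam).2.2 (j + 1) (by omega) (by omega)
    exact tendstoUniformlyOn_of_continuousAt hj (hb (j + 1) hj) (hq (j + 1) hj) hS
      ((hright.const_mul _).congr (.of_forall fun lam => (hjump lam).1.symm))
      (((hright'.const_mul _).add (hright.const_mul _)).congr
        (.of_forall fun lam => (hjump lam).2.symm))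

theorem continuousAt_piecewisePairing {S S' : ℕ → ℝ → ℂ → ℂ} (hb : ∀ j < N, b j ≤ b (j + 1))
    (hq : ∀ j < N, IntervalIntegrable q volume (b j) (b (j + 1)))
    (hS : ∀ lam, PiecewiseSLSol q N b γ η lam (fun j x => S j x lam) (fun j x => S' j x lam))
    (hinit : ContinuousAt (S 1 (b 0)) z) (hinit' : ContinuousAt (S' 1 (b 0)) z)
    (hv : PiecewiseSLSol q N b γ η mu v v') :
    ContinuousAt (fun lam => piecewisePairing N b (fun j x => S j x lam) v) z := by
  refine tendsto_finsetSum _ fun j hj => ?_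
  have hj := Finset.mem_range.mp hj
  have hv_cont := (hv.isSLSolutionOn hj (hb j hj) (hq j hj)).isPrimitiveOn.continuousOn
  have hS_cont : ∀ lam, ContinuousOn (fun x => S (j + 1) x lam) (uIcc (b j) (b (j + 1))) :=
    fun lam => ((hS lam).isSLSolutionOn hj (hb j hj) (hq j hj)).isPrimitiveOn.continuousOn
  have hunif := (tendstoUniformlyOn hb hq hS hinit hinit' j hj).1
  rw [← uIcc_of_le (hb j hj)] at hunif
  have hconst : TendstoUniformlyOn (fun _ : ℂ => v (j + 1)) (v (j + 1)) (𝓝 z)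
      (uIcc (b j) (b (j + 1))) := fun u hu => .of_forall fun _ _ _ => refl_mem_uniformity hu
  refine TendstoUniformlyOn.tendsto_intervalIntegral_of_continuousOn
    (.of_forall fun lam => (hS_cont lam).mul hv_cont) ?_
  rw [← tendstoLocallyUniformlyOn_iff_tendstoUniformlyOn_of_compact isCompact_uIcc]
  exact hunif.tendstoLocallyUniformlyOn.mul₀ hconst.tendstoLocallyUniformlyOn (hS_cont z) hv_cont

end PiecewiseSLSol

lemma deriv_ne_zero_of_mul_eq_sub_mul {𝕜 : Type*} [NontriviallyNormedField 𝕜] {f F : 𝕜 → 𝕜}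
    {w z : 𝕜} (h : ∀ x, f x * w = (x - z) * F x) (hF : ContinuousAt F z) (hFz : F z ≠ 0) :
    deriv f z ≠ 0 := by
  have hderiv : HasDerivAt (fun x => (x - z) * F x) (F z) z := by
    refine hasDerivAt_iff_tendsto_slope.mpr ((hF.tendsto.mono_left nhdsWithin_le_nhds).congr' ?_)
    filter_upwards [self_mem_nhdsWithin] with x hx
    rw [slope_def_field, sub_self, zero_mul, sub_zero, mul_div_cancel_left₀ _ (sub_ne_zero.mpr hx)]
  have hmul : deriv f z * w = F z := by
    rw [← deriv_mul_const_field, funext h, hderiv.deriv]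
  exact left_ne_zero_of_mul (hmul.trans_ne hFz)

lemma intervalIntegrable_of_integrableOn_partition {E : Type*} [NormedAddCommGroup E]
    {f : ℝ → E} {N : ℕ} {b : ℕ → ℝ} (hb : ∀ j < N, b j ≤ b (j + 1))
    (hf : IntegrableOn f (Icc (b 0) (b N))) :
    ∀ j < N, IntervalIntegrable f volume (b j) (b (j + 1)) := by
  have hmono : MonotoneOn b (Iic N) := monotoneOn_of_le_add_one ordConnected_Iic
    fun j _ _ hj => hb j (Order.succ_le_iff.mp hj)
  intro j hj
  rw [intervalIntegrable_iff_integrableOn_Icc_of_le (hb j hj)]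
  exact hf.mono_set (Icc_subset_Icc (hmono N.zero_le hj.le j.zero_le) (hmono hj self_mem_Iic hj))

theorem zeros_of_d_real_and_simple_general
    (q : ℝ → ℝ) (N : ℕ) (hN : 1 ≤ N) (b : ℕ → ℝ) (γ η : ℕ → ℝ)
    (hq : IntegrableOn q (Icc (b 0) (b N)))
    (hb : ∀ j < N, b j < b (j + 1))
    (hγ : ∀ j, 1 ≤ j → j ≤ N - 1 → γ j ≠ 0)
    (S S' : ℕ → ℝ → ℂ → ℂ)
    (hS : ∀ lam : ℂ, PiecewiseSLSol q N b γ η lam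
        (fun j x => S j x lam) (fun j x => S' j x lam))
    (hS0 : ∀ lam : ℂ, S 1 (b 0) lam = 0) (hS'0 : ∀ lam : ℂ, S' 1 (b 0) lam = 1) :
    ∀ z : ℂ, S N (b N) z = 0 → z.im = 0 ∧ deriv (fun lam => S N (b N) lam) z ≠ 0 := by
  intro z hz
  have hb' : ∀ j < N, b j ≤ b (j + 1) := fun j hj => (hb j hj).le
  have hqj := intervalIntegrable_of_integrableOn_partition hb' hq
  set F : ℂ → ℂ := fun lam => piecewisePairing N b (fun j x => S j x lam) fun j x => conj (S j x z)
  have hlagrange : ∀ lam, S N (b N) lam * conj (S' N (b N) z) = (lam - conj z) * F lam :=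
    fun lam => by
      simpa [wronskian, hS0, hz] using
        (hS lam).wronskian_sub_wronskian hN hb' hqj hγ (hS z).conjugate
  have hFz : F z ≠ 0 :=
    (hS z).piecewisePairing_conj_ne_zero hN hb hqj (hS'0 z ▸ one_ne_zero)
  have hreal : conj z = z := by
    have hprod := hlagrange z
    rw [hz, zero_mul, eq_comm] at hprod
    exact (sub_eq_zero.mp ((mul_eq_zero.mp hprod).resolve_right hFz)).symm
  refine ⟨Complex.conj_eq_iff_im.mp hreal, ?_⟩
  rw [hreal] at hlagrange
  have hcont : ContinuousAt F z := PiecewiseSLSol.continuousAt_piecewisePairing hb' hqj hS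
    (by simpa only [funext hS0] using continuousAt_const)
    (by simpa only [funext hS'0] using continuousAt_const) (hS z).conjugate
  exact deriv_ne_zero_of_mul_eq_sub_mul hlagrange hcont hFz

/-- every zero of the entire function d(λ) = S(T,λ) (where S is the
solution with S(0,λ)=0, S'(0,λ)=1 satisfying the discontinuity conditions) is
real and simple: d(z) = 0 implies z ∈ ℝ and (d/dλ)d(z) ≠ 0. -/
theorem zeros_of_d_real_and_simple
    (T : ℝ) (hT : 0 < T) (q : ℝ → ℝ) (hq : IntegrableOn q (Icc 0 T))
    (N : ℕ) (hN : 1 ≤ N) (b : ℕ → ℝ) (γ η : ℕ → ℝ)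
    (hb0 : b 0 = 0) (hbN : b N = T)
    (hbmono : ∀ j < N, b j < b (j + 1))
    (hγ : ∀ j, 1 ≤ j → j ≤ N - 1 → 0 < γ j)
    (S S' : ℕ → ℝ → ℂ → ℂ)
    (hS : ∀ lam : ℂ, PiecewiseSLSol q N b γ η lam
        (fun j x => S j x lam) (fun j x => S' j x lam))
    (hS0 : ∀ lam : ℂ, S 1 0 lam = 0) (hS'0 : ∀ lam : ℂ, S' 1 0 lam = 1)
    (hentire : Differentiable ℂ (fun lam => S N T lam)) :
    ∀ z : ℂ, S N T z = 0 → z.im = 0 ∧ deriv (fun lam => S N T lam) z ≠ 0 := by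
  subst hbN
  rw [← hb0] at hq hS0 hS'0
  exact zeros_of_d_real_and_simple_general q N hN b γ η hq hbmono
    (fun j hj hjN => (hγ j hj hjN).ne') S S' hS hS0 hS'0
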